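/- Let U be a nonempty finite set of users and R = {r₁, …, r_k} a finite set of resources, let ω be a weighted user authorization function, and let C = B ∪ S, where B is a set of unordered pairs {r_i, r_j} of distinct resources carrying BoD_E constraints with weights w_c(A) = 0 if A(r_i) ∩ A(r_j) ≠ ∅ and ℓ_c > 0 otherwise, and S is a set of unordered pairs {r_i, r_j} carrying SoD_U constraints with weights w_c(A) = f_c(|A(r_i) ∩ A(r_j)|), f_c : ℤ → ℕ monotonically increasing with f_c(z) = 0 iff z ≤ 0. For each i let Γ(r_i) = {r_j : {r_i, r_j} ∈ B}, and define step sets S^i = {s^i} if Γ(r_i) = ∅ and S^i = {s^i_j : r_j ∈ Γ(r_i)} otherwise, with S' = S¹ ∪ ⋯ ∪ S^k. For a plan π : S' → U, let π(S^i) = {π(s) : s ∈ S^i}, for T ⊆ S' let R_T = {r_i : T ∩ S^i ≠ ∅}, and define the plan weight W(π) = Σ_{u ∈ U} ω(u, R_{π^{-1}(u)}) + Σ over {r_i,r_j} ∈ B of (0 if π(s^i_j) = π(s^j_i), else ℓ_c) + Σ over {r_i,r_j} ∈ S of f_c(|π(S^i) ∩ π(S^j)|). Then the minimum of w(A) = Ω(A)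 + w_C(A) over all complete authorization relations A ⊆ U × R equals the minimum of W(π) over all plans π : S' → U. -/

import Mathlib

/-!
A plan `π` induces the complete relation granting `r_i` to the users who perform a step of `S^i`.
The authorization and SoD_U weights of this relation are those of `π`, and its BoD_E weight is no
larger, since `π(s^i_j) = π(s^j_i)` exhibits a user shared by `r_i` and `r_j`. Conversely, from a
complete relation `A` pick for each step `s^i_j` a user in `A(r_i) ∩ A(r_j)` when this is nonempty,
the same one for `s^j_i`, and otherwise any user in `A(r_i)`. The relation induced by this plan is
contained in `A` and every BoD_E constraint satisfied by `A` costs the plan nothing, so by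
monotonicity of the remaining weights the plan weighs no more than `A`.
-/

open Finset

namespace APEP

variable {U : Type*} [Fintype U] [DecidableEq U]

/-- The set of users authorized for resource `r` by `A`. -/
def ares {R : Type*} [Fintype R] [DecidableEq R] [DecidableEq U]
    (A : Finset (U × R)) (r : R) : Finset U := univ.filter (fun u => (u, r) ∈ A)

/-- The set of resources for which user `u` is authorized by `A`. -/
def ausr {R : Type*} [Fintype R] [DecidableEq R] [DecidableEq U]
    (A : Finset (U × R)) (u : U) : Finset R := univ.filter (fun r => (u, r) ∈ A)

/-- An authorization relation is complete if every resource has an authorized user. -/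
def Complete {R : Type*} [Fintype R] [DecidableEq R] [DecidableEq U]
    (A : Finset (U × R)) : Prop := ∀ r : R, (ares A r).Nonempty

/-- `f : ℤ → ℕ` is monotonically increasing with `f z = 0` iff `z ≤ 0`. -/
def MonoIncZero (f : ℤ → ℕ) : Prop := Monotone f ∧ ∀ z : ℤ, f z = 0 ↔ z ≤ 0

/-- `Γ(r_i)`: the resources paired with `r_i` by some BoD_E constraint.  Unordered
pairs of distinct resources are represented by ordered pairs `(i, j)` with `i < j`. -/
def gam {k : ℕ} (Bc : Finset (Fin k × Fin k)) (i : Fin k) : Finset (Fin k) :=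
  univ.filter (fun j => (i, j) ∈ Bc ∨ (j, i) ∈ Bc)

/-- The set of workflow steps `S^i` associated with resource `r_i`:
`{s^i}` if `Γ(r_i) = ∅`, and `{s^i_j : r_j ∈ Γ(r_i)}` otherwise.  Step `s^i` is
encoded as `(i, none)` and step `s^i_j` as `(i, some j)`. -/
def stp {k : ℕ} (Bc : Finset (Fin k × Fin k)) (i : Fin k) :
    Finset (Fin k × Option (Fin k)) :=
  if gam Bc i = ∅ then {(i, none)} else (gam Bc i).image (fun j => (i, some j))

section Relation

variable {R : Type*} [Fintype R] [DecidableEq R] {A B : Finset (U × R)} {r r' : R} {u : U}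

@[simp]
theorem mem_ares : u ∈ ares A r ↔ (u, r) ∈ A := by
  simp [ares]

omit [Fintype U] in
@[simp]
theorem mem_ausr : r ∈ ausr A u ↔ (u, r) ∈ A := by
  simp [ausr]

theorem ares_mono (h : A ⊆ B) (r : R) : ares A r ⊆ ares B r :=
  fun _ hu => mem_ares.2 (h (mem_ares.1 hu))

omit [Fintype U] in
theorem ausr_mono (h : A ⊆ B) (u : U) : ausr A u ⊆ ausr B u :=
  fun _ hr => mem_ausr.2 (h (mem_ausr.1 hr))

theorem complete_univ [Nonempty U] : Complete (univ : Finset (U × R)) :=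
  fun _ => ⟨Classical.arbitrary U, mem_ares.2 (mem_univ _)⟩

/-- The users among whom a step is assigned when `A` is turned into a plan: a step `s^i_j` goes
to a user shared by `r_i` and `r_j` if there is one, and any other step of `r_i` to a user of
`r_i`. -/
def candidates (A : Finset (U × R)) : R × Option R → Finset U
  | (r, none) => ares A r
  | (r, some r') => if (ares A r ∩ ares A r').Nonempty then ares A r ∩ ares A r' else ares A r

theorem candidates_subset_ares : ∀ s : R × Option R, candidates A s ⊆ ares A s.1
  | (_, none) => Subset.rfl
  | (_, some _) => by
    dsimp only [candidates]
    split_ifs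
    exacts [inter_subset_left, Subset.rfl]

theorem Complete.candidates_nonempty (hA : Complete A) :
    ∀ s : R × Option R, (candidates A s).Nonempty
  | (r, none) => hA r
  | (r, some _) => by
    dsimp only [candidates]
    split_ifs with h
    exacts [h, hA r]

theorem candidates_comm (h : (ares A r ∩ ares A r').Nonempty) :
    candidates A (r, some r') = candidates A (r', some r) := by
  simp only [candidates, inter_comm (ares A r') (ares A r), if_pos h]

theorem Complete.exists_plan (hA : Complete A) :
    ∃ π : R × Option R → U, (∀ s, π s ∈ ares A s.1) ∧
      ∀ r r', (ares A r ∩ ares A r').Nonempty → π (r, some r') = π (r', some r) := by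
  -- The choice depends on the candidate set alone, so steps with equal candidates get one user.
  choose pick pick_mem using fun C : {C : Finset U // C.Nonempty} => C.2
  refine ⟨fun s => pick ⟨candidates A s, hA.candidates_nonempty s⟩,
    fun s => candidates_subset_ares s (pick_mem _), fun r r' h => ?_⟩
  exact congrArg pick (Subtype.ext (candidates_comm h))

end Relation

section Steps

variable {k : ℕ} {Bc : Finset (Fin k × Fin k)} {i j : Fin k}

theorem fst_eq_of_mem_stp {s : Fin k × Option (Fin k)} (hs : s ∈ stp Bc i) : s.1 = i := by
  unfold stp at hs
  split_ifs at hs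
  · rw [mem_singleton.1 hs]
  · obtain ⟨j, -, rfl⟩ := mem_image.1 hs
    rfl

theorem stp_nonempty (Bc : Finset (Fin k × Fin k)) (i : Fin k) : (stp Bc i).Nonempty := by
  unfold stp
  split_ifs with h
  · exact singleton_nonempty _
  · exact (nonempty_iff_ne_empty.2 h).image _

theorem mk_some_mem_stp (h : j ∈ gam Bc i) : (i, some j) ∈ stp Bc i := by
  rw [stp, if_neg (ne_empty_of_mem h)]
  exact mem_image_of_mem _ h

theorem mk_some_mem_stp_left (h : (i, j) ∈ Bc) : (i, some j) ∈ stp Bc i :=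
  mk_some_mem_stp (mem_filter.2 ⟨mem_univ _, .inl h⟩)

theorem mk_some_mem_stp_right (h : (i, j) ∈ Bc) : (j, some i) ∈ stp Bc j :=
  mk_some_mem_stp (mem_filter.2 ⟨mem_univ _, .inr h⟩)

end Steps

section Reduction

variable {k : ℕ} (Bc : Finset (Fin k × Fin k)) (ℓB : Fin k × Fin k → ℕ)
  (Sc : Finset (Fin k × Fin k)) (fS : Fin k × Fin k → ℤ → ℕ) (ω : U → Finset (Fin k) → ℕ)

/-- The weight `w(A) = Ω(A) + w_C(A)` of an authorization relation, with the BoD_E constraints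
`Bc` penalized by `ℓB` and the SoD_U constraints `Sc` by `fS`. -/
def relationWeight (A : Finset (U × Fin k)) : ℕ :=
  (∑ u, ω u (ausr A u)) +
    ((∑ p ∈ Bc, if (ares A p.1 ∩ ares A p.2).Nonempty then 0 else ℓB p) +
      ∑ p ∈ Sc, fS p (ares A p.1 ∩ ares A p.2).card)

/-- The weight `W(π)` of a plan `π`. A plan is encoded as a function on all pairs, of which only
the values on `S' = ⋃ i, stp Bc i` contribute. -/
def planWeight (π : Fin k × Option (Fin k) → U) : ℕ :=
  (∑ u, ω u (univ.filter fun i => ∃ s ∈ stp Bc i, π s = u)) +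
    ((∑ p ∈ Bc, if π (p.1, some p.2) = π (p.2, some p.1) then 0 else ℓB p) +
      ∑ p ∈ Sc, fS p ((stp Bc p.1).image π ∩ (stp Bc p.2).image π).card)

/-- The authorization relation induced by a plan: each resource is granted to the users who
perform one of its steps. -/
def planRelation (π : Fin k × Option (Fin k) → U) : Finset (U × Fin k) :=
  univ.filter fun q => ∃ s ∈ stp Bc q.2, π s = q.1

variable {A : Finset (U × Fin k)} {π : Fin k × Option (Fin k) → U}

theorem ares_planRelation (π : Fin k × Option (Fin k) → U) (i : Fin k) :
    ares (planRelation Bc π) i = (stp Bc i).image π := by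
  ext u
  simp [planRelation]

theorem ausr_planRelation (π : Fin k × Option (Fin k) → U) (u : U) :
    ausr (planRelation Bc π) u = univ.filter fun i => ∃ s ∈ stp Bc i, π s = u := by
  ext i
  simp [planRelation]

theorem complete_planRelation (π : Fin k × Option (Fin k) → U) :
    Complete (planRelation Bc π) := fun i => by
  rw [ares_planRelation]
  exact (stp_nonempty Bc i).image π

theorem planRelation_subset (h : ∀ s, π s ∈ ares A s.1) : planRelation Bc π ⊆ A := by
  rintro ⟨u, i⟩ hq
  obtain ⟨s, hs, rfl⟩ := (mem_filter.1 hq).2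
  obtain rfl : s.1 = i := fst_eq_of_mem_stp hs
  exact mem_ares.1 (h s)

theorem ares_planRelation_inter_nonempty {i j : Fin k} (hij : (i, j) ∈ Bc)
    (h : π (i, some j) = π (j, some i)) :
    (ares (planRelation Bc π) i ∩ ares (planRelation Bc π) j).Nonempty := by
  simp only [ares_planRelation]
  exact ⟨π (i, some j), mem_inter.2 ⟨mem_image_of_mem π (mk_some_mem_stp_left hij),
    h ▸ mem_image_of_mem π (mk_some_mem_stp_right hij)⟩⟩

theorem planWeight_eq (π : Fin k × Option (Fin k) → U) :
    planWeight Bc ℓB Sc fS ω π =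
      (∑ u, ω u (ausr (planRelation Bc π) u)) +
        ((∑ p ∈ Bc, if π (p.1, some p.2) = π (p.2, some p.1) then 0 else ℓB p) +
          ∑ p ∈ Sc, fS p
            (ares (planRelation Bc π) p.1 ∩ ares (planRelation Bc π) p.2).card) := by
  simp only [planWeight, ausr_planRelation, ares_planRelation]

theorem relationWeight_planRelation_le (π : Fin k × Option (Fin k) → U) :
    relationWeight Bc ℓB Sc fS ω (planRelation Bc π) ≤ planWeight Bc ℓB Sc fS ω π := by
  rw [planWeight_eq, relationWeight]
  gcongr with p hp
  have := ares_planRelation_inter_nonempty Bc (π := π) hp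
  grind

variable {fS ω}

theorem planWeight_le_relationWeight (hfS : ∀ p ∈ Sc, Monotone (fS p))
    (hω : ∀ u, Monotone (ω u)) (hmem : ∀ s, π s ∈ ares A s.1)
    (hshared : ∀ i j, (ares A i ∩ ares A j).Nonempty → π (i, some j) = π (j, some i)) :
    planWeight Bc ℓB Sc fS ω π ≤ relationWeight Bc ℓB Sc fS ω A := by
  have hsub : planRelation Bc π ⊆ A := planRelation_subset Bc hmem
  rw [planWeight_eq, relationWeight]
  gcongr with u _ p _ p hp
  · exact hω u (ausr_mono hsub u)
  · have := hshared p.1 p.2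
    grind
  · exact hfS p hp (by gcongr <;> exact ares_mono hsub _)

theorem bodE_sodU_valuedWSP_reduction_general [Nonempty U]
    (hfS : ∀ p ∈ Sc, Monotone (fS p)) (hω : ∀ u, Monotone (ω u)) :
    sInf {n : ℕ | ∃ A : Finset (U × Fin k), Complete A ∧ relationWeight Bc ℓB Sc fS ω A = n} =
      sInf {n : ℕ | ∃ π : Fin k × Option (Fin k) → U, planWeight Bc ℓB Sc fS ω π = n} := by
  apply le_antisymm
  · refine le_csInf ⟨_, fun _ => Classical.arbitrary U, rfl⟩ ?_
    rintro _ ⟨π, rfl⟩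
    exact csInf_le_of_le (OrderBot.bddBelow _)
      ⟨planRelation Bc π, complete_planRelation Bc π, rfl⟩
      (relationWeight_planRelation_le Bc ℓB Sc fS ω π)
  · refine le_csInf ⟨_, univ, complete_univ, rfl⟩ ?_
    rintro _ ⟨A, hA, rfl⟩
    obtain ⟨π, hmem, hshared⟩ := hA.exists_plan
    exact csInf_le_of_le (OrderBot.bddBelow _) ⟨π, rfl⟩
      (planWeight_le_relationWeight Bc ℓB Sc hfS hω hmem hshared)

end Reduction

theorem bodE_sodU_valuedWSP_reduction [Nonempty U] (k : ℕ)
    -- BoD_E constraints: unordered pairs `{r_i, r_j}` of distinct resources,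
    -- represented by pairs `(i, j)` with `i < j`, with penalties `ℓB`
    (Bc : Finset (Fin k × Fin k)) (hB : ∀ p ∈ Bc, p.1 < p.2)
    (ℓB : Fin k × Fin k → ℕ) (hℓB : ∀ p ∈ Bc, 0 < ℓB p)
    -- SoD_U constraints: unordered pairs of distinct resources with weight functions `fS`
    (Sc : Finset (Fin k × Fin k)) (hS : ∀ p ∈ Sc, p.1 < p.2)
    (fS : Fin k × Fin k → ℤ → ℕ) (hfS : ∀ p ∈ Sc, MonoIncZero (fS p))
    -- the weighted user authorization function
    (ω : U → Finset (Fin k) → ℕ)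
    (hω : ∀ (u : U) (T' T : Finset (Fin k)), T' ⊆ T → ω u T' ≤ ω u T)
    -- the total weight `w(A) = Ω(A) + w_C(A)` of an authorization relation
    (wt : Finset (U × Fin k) → ℕ)
    (hwt : ∀ A, wt A = (∑ u, ω u (ausr A u)) +
      ((∑ p ∈ Bc, if ((ares A p.1) ∩ (ares A p.2)).Nonempty then 0 else ℓB p) +
        ∑ p ∈ Sc, fS p (((ares A p.1) ∩ (ares A p.2)).card)))
    -- the weight `W(π)` of a plan `π : S' → U`
    (W : (Fin k × Option (Fin k) → U) → ℕ)
    (hW : ∀ π, W π =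
      (∑ u, ω u (univ.filter (fun i => ∃ s ∈ stp Bc i, π s = u))) +
        ((∑ p ∈ Bc, if π (p.1, some p.2) = π (p.2, some p.1) then 0 else ℓB p) +
          ∑ p ∈ Sc, fS p ((((stp Bc p.1).image π) ∩ ((stp Bc p.2).image π)).card))) :
    sInf {n : ℕ | ∃ A : Finset (U × Fin k), Complete A ∧ wt A = n} =
      sInf {n : ℕ | ∃ π : Fin k × Option (Fin k) → U, W π = n} := by
  obtain rfl : wt = relationWeight Bc ℓB Sc fS ω := funext hwt
  obtain rfl : W = planWeight Bc ℓB Sc fS ω := funext hW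
  exact bodE_sodU_valuedWSP_reduction_general Bc ℓB Sc (fun p hp => (hfS p hp).1) hω

end APEP
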